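/- arXiv:1212.0106 — 4 statements merged into one kernel-verified Lean document; each statement's English description precedes it below -/
import Mathlib

section
/- Let A and B be finite types and r : A → B → Prop a relation such that |N(X)| ≥ |X| for every X ⊆ A, where N(X) = {b : B | ∃ a ∈ X, r a b}, and let q ≥ 1 be a natural number. Then the following are equivalent: (i) |N(X)| ≥ |X| + q for every nonempty X ⊆ A; (ii) for every x ∈ A, the relation r' on A ⊕ Fin q defined by r' (inl a) b = r a b and r' (inr t) b = r x b satisfies |N'(Y)| ≥ |Y| for every Y ⊆ A ⊕ Fin q, where N'(Y) = {b : B | ∃ u ∈ Y, r' u b}. -/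
open scoped Classical

/-!
`G_{qx}` is the pullback of `G` along the map `π` that collapses the copies of `x` onto `x`, so the
neighborhood of `Y` in `G_{qx}` is the neighborhood of `π(Y)` in `G`. Since `π` identifies at most
`q` surplus vertices, `|Y| ≤ |π(Y)| + q`, with equality when `Y = π⁻¹(X)` for some `X` containing
`x`. Hence expansion of `G` at `π(Y)` yields that of `G_{qx}` at `Y`, and expansion of `G_{qx}` at
`π⁻¹(X)` yields that of `G` at `X`.
-/

section

variable {A A' B T : Type*} {r : A → B → Prop}

/-- The neighborhood `N(X)` of a set `X` of vertices on the `A`-side of the bipartite graph `r`. -/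
def neighborhood (r : A → B → Prop) (X : Set A) : Set B :=
  {b | ∃ a ∈ X, r a b}

/-- The bipartite graph `r` is `q`-expanding. Sizes are taken in `ℕ∞`, so that the graph may be
infinite. As the inequality is trivial for `X = ∅` when `q = 0`, restricting to nonempty `X` covers
the notion of a 0-expanding graph as well. -/
def IsExpanding (r : A → B → Prop) (q : ℕ∞) : Prop :=
  ∀ X : Set A, X.Nonempty → X.encard + q ≤ (neighborhood r X).encard

/-- The graph `G_{qx}` obtained from `r` by adding copies of the vertex `x`. The new vertices are
indexed by a type `T`, whose cardinality plays the role of `q`. -/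
def addCopies (r : A → B → Prop) (x : A) (T : Type*) : A ⊕ T → B → Prop :=
  Sum.elim r fun _ => r x

/-- The projection from the vertices of `G_{qx}` to those of the original graph, which sends every
copy of `x` to `x`. -/
def collapse (x : A) : A ⊕ T → A :=
  Sum.elim id fun _ => x

theorem neighborhood_comp (r : A → B → Prop) (f : A' → A) (Y : Set A') :
    neighborhood (r ∘ f) Y = neighborhood r (f '' Y) := by
  simp only [neighborhood, Set.exists_mem_image, Function.comp_apply]

theorem addCopies_eq_comp_collapse (r : A → B → Prop) (x : A) :
    addCopies r x T = r ∘ collapse x :=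
  (Sum.comp_elim r id fun _ => x).symm

theorem collapse_surjective (x : A) : Function.Surjective (collapse x : A ⊕ T → A) :=
  fun a => ⟨Sum.inl a, rfl⟩

theorem encard_preimage_inl_add_encard_preimage_inr (Y : Set (A ⊕ T)) :
    (Sum.inl ⁻¹' Y).encard + (Sum.inr ⁻¹' Y).encard = Y.encard := by
  rw [← Sum.inl_injective.encard_image (Sum.inl ⁻¹' Y),
    ← Sum.inr_injective.encard_image (Sum.inr ⁻¹' Y),
    ← Set.encard_union_eq Set.disjoint_image_inl_image_inr,
    Set.image_preimage_inl_union_image_preimage_inr]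

theorem encard_le_encard_image_collapse_add (x : A) (Y : Set (A ⊕ T)) :
    Y.encard ≤ (collapse x '' Y).encard + ENat.card T := by
  have inl_subset : Sum.inl ⁻¹' Y ⊆ collapse x '' Y := fun a ha => ⟨Sum.inl a, ha, rfl⟩
  rw [← encard_preimage_inl_add_encard_preimage_inr Y]
  exact add_le_add (Set.encard_le_encard inl_subset) Set.encard_le_card

theorem encard_preimage_collapse {x : A} {X : Set A} (hx : x ∈ X) :
    (collapse x ⁻¹' X : Set (A ⊕ T)).encard = X.encard + ENat.card T := by
  have preimage_inr : (Sum.inr ⁻¹' (collapse x ⁻¹' X) : Set T) = Set.univ :=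
    Set.eq_univ_of_forall fun _ => hx
  rw [← encard_preimage_inl_add_encard_preimage_inr, preimage_inr, Set.encard_univ]
  rfl

theorem isExpanding_addCopies {p : ℕ∞} (hr : IsExpanding r (p + ENat.card T)) (x : A) :
    IsExpanding (addCopies r x T) p := by
  intro Y hY
  rw [addCopies_eq_comp_collapse, neighborhood_comp]
  calc Y.encard + p
      ≤ (collapse x '' Y).encard + ENat.card T + p := by
        gcongr
        exact encard_le_encard_image_collapse_add x Y
    _ = (collapse x '' Y).encard + (p + ENat.card T) := by ring
    _ ≤ (neighborhood r (collapse x '' Y)).encard := hr _ (hY.image _)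

theorem isExpanding_of_forall_addCopies {p : ℕ∞} (hr : ∀ x, IsExpanding (addCopies r x T) p) :
    IsExpanding r (p + ENat.card T) := by
  rintro X ⟨x, hx⟩
  calc X.encard + (p + ENat.card T)
      = (collapse x ⁻¹' X : Set (A ⊕ T)).encard + p := by
        rw [encard_preimage_collapse hx]
        ring
    _ ≤ (neighborhood (addCopies r x T) (collapse x ⁻¹' X)).encard :=
        hr x _ ⟨Sum.inl x, hx⟩
    _ = (neighborhood r X).encard := by
        rw [addCopies_eq_comp_collapse, neighborhood_comp,
          Set.image_preimage_eq X (collapse_surjective x)]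

theorem isExpanding_natCast_iff [Finite A] [Fintype B] {q : ℕ} :
    IsExpanding r q ↔ ∀ X : Finset A, X.Nonempty →
      X.card + q ≤ (Finset.univ.filter fun b : B => ∃ a ∈ X, r a b).card := by
  have encard_neighborhood (X : Finset A) : (neighborhood r X).encard =
      (Finset.univ.filter fun b : B => ∃ a ∈ X, r a b).card := by
    simp [neighborhood, ← Set.encard_coe_eq_coe_finsetCard]
  have := Fintype.ofFinite A
  rw [IsExpanding, ← Fintype.finsetEquivSet.forall_congr_right]
  simp only [Fintype.coe_finsetEquivSet, Finset.coe_nonempty, Set.encard_coe_eq_coe_finsetCard,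
    encard_neighborhood]
  norm_cast

theorem isExpanding_zero_iff [Finite A] [Fintype B] :
    IsExpanding r 0 ↔ ∀ X : Finset A,
      X.card ≤ (Finset.univ.filter fun b : B => ∃ a ∈ X, r a b).card := by
  rw [← Nat.cast_zero, isExpanding_natCast_iff]
  refine forall_congr' fun X => ?_
  rcases X.eq_empty_or_nonempty with rfl | hX <;> simp [*]

theorem stmt6_general (r : A → B → Prop) (p : ℕ∞) :
    IsExpanding r (p + ENat.card T) ↔ ∀ x : A, IsExpanding (addCopies r x T) p :=
  ⟨isExpanding_addCopies, isExpanding_of_forall_addCopies⟩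

end

/-- A 0-expanding bipartite graph `r : A → B → Prop` is `q`-expanding (`q ≥ 1`) if and
only if, for every `x ∈ A`, the graph `G_{qx}` obtained by adding `q` new vertices with
the same neighborhood as `x` is 0-expanding. -/
theorem stmt6 {A B : Type*} [Fintype A] [Fintype B] (r : A → B → Prop)
    (q : ℕ) (hq : 1 ≤ q)
    (h0 : ∀ X : Finset A,
      X.card ≤ (Finset.univ.filter fun b : B => ∃ a ∈ X, r a b).card) :
    (∀ X : Finset A, X.Nonempty →
        X.card + q ≤ (Finset.univ.filter fun b : B => ∃ a ∈ X, r a b).card) ↔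
    (∀ x : A, ∀ Y : Finset (A ⊕ Fin q),
        Y.card ≤ (Finset.univ.filter fun b : B =>
          ∃ u ∈ Y, Sum.elim r (fun _ => r x) u b).card) := by
  simpa only [zero_add, ENat.card_eq_coe_fintype_card, Fintype.card_fin, isExpanding_natCast_iff,
    isExpanding_zero_iff, addCopies] using stmt6_general (T := Fin q) r 0
end

section
/- Let F be a CNF formula over V and S ⊆ V. Suppose the formula F[S] is satisfiable, i.e., there is an assignment of the variables of S satisfying, for every index i ∈ F_S, the restricted clause F i ∩ (literals over S). Then sat(F) = sat(F ∖ F_S) + |F_S|. -/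
/-!
Overwriting an assignment on `S` by one that satisfies `F[S]` makes every clause of `F_S` true and
does not affect the clauses of `F ∖ F_S`, as these contain no variable of `S`. So an optimal
assignment for `F ∖ F_S` can be changed into one that also satisfies all of `F_S`, and no
assignment satisfies more than `|F_S|` clauses there.
-/

open scoped Classical

/-- A truth assignment `τ` satisfies a clause `c` (a finite set of literals `(v, b)`)
if some literal `(v, b) ∈ c` has `τ v = b`. -/
def Satisfies {V : Type*} (τ : V → Bool) (c : Finset (V × Bool)) : Prop :=
  ∃ l ∈ c, τ l.1 = l.2

/-- `satCount F τ` is the number of indices whose clause is satisfied by `τ`. -/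
noncomputable def satCount {V I : Type*} [Fintype I]
    (F : I → Finset (V × Bool)) (τ : V → Bool) : ℕ :=
  (Finset.univ.filter fun i => Satisfies τ (F i)).card

/-- `satMax F` is the maximum of `satCount F τ` over all assignments `τ`. -/
noncomputable def satMax {V I : Type*} [Fintype V] [Fintype I]
    (F : I → Finset (V × Bool)) : ℕ :=
  Finset.univ.sup fun τ : V → Bool => satCount F τ

/-- `M` is a matching of the formula `F`: each pair `(v, i) ∈ M` has variable `v`
occurring in clause `F i`, and the pairs have pairwise distinct variables and
pairwise distinct indices. -/
def IsMatching {V I : Type*} (F : I → Finset (V × Bool)) (M : Finset (V × I)) : Prop :=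
  (∀ p ∈ M, ∃ b, (p.1, b) ∈ F p.2) ∧
  ∀ p ∈ M, ∀ q ∈ M, p ≠ q → p.1 ≠ q.1 ∧ p.2 ≠ q.2

/-- The matching number `ν(F)`: the largest size of a matching of `F`. -/
noncomputable def matchNum {V I : Type*} [Fintype V] [Fintype I]
    (F : I → Finset (V × Bool)) : ℕ :=
  (Finset.univ.filter fun M : Finset (V × I) => IsMatching F M).sup Finset.card

section Assignments

variable {V I : Type*}

theorem satisfies_congr {τ τ' : V → Bool} {c : Finset (V × Bool)}
    (h : ∀ l ∈ c, τ l.1 = τ' l.1) : Satisfies τ c ↔ Satisfies τ' c :=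
  exists_congr fun l => and_congr_right fun hl => by rw [h l hl]

variable [Fintype I]

theorem satCount_congr {F : I → Finset (V × Bool)} {τ τ' : V → Bool}
    (h : ∀ i, ∀ l ∈ F i, τ l.1 = τ' l.1) : satCount F τ = satCount F τ' := by
  simp only [satCount, satisfies_congr (h _)]

theorem satCount_le_card (F : I → Finset (V × Bool)) (τ : V → Bool) :
    satCount F τ ≤ Fintype.card I :=
  Finset.card_le_univ _

theorem satCount_eq_card {F : I → Finset (V × Bool)} {τ : V → Bool}
    (h : ∀ i, Satisfies τ (F i)) : satCount F τ = Fintype.card I := by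
  rw [satCount, Finset.filter_true_of_mem fun i _ => h i, Finset.card_univ]

theorem satCount_notMem_add_satCount_mem (F : I → Finset (V × Bool)) (A : Set I) (τ : V → Bool) :
    satCount (fun i : {i // i ∉ A} => F i) τ + satCount (fun i : {i // i ∈ A} => F i) τ =
      satCount F τ := by
  simp only [satCount, Finset.card_filter]
  rw [add_comm, Fintype.sum_subtype_add_sum_subtype (· ∈ A)
    fun i => if Satisfies τ (F i) then 1 else 0]

theorem bddAbove_range_satCount (F : I → Finset (V × Bool)) :
    BddAbove (Set.range (satCount F)) :=
  ⟨Fintype.card I, Set.forall_mem_range.2 (satCount_le_card F)⟩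

theorem exists_satCount_eq_iSup (F : I → Finset (V × Bool)) :
    ∃ τ, satCount F τ = ⨆ τ, satCount F τ :=
  Nat.sSup_mem (Set.range_nonempty _) (bddAbove_range_satCount F)

theorem iSup_satCount_le_add_card (F : I → Finset (V × Bool)) (A : Set I) :
    ⨆ τ, satCount F τ ≤
      (⨆ τ, satCount (fun i : {i // i ∉ A} => F i) τ) + Fintype.card {i // i ∈ A} := by
  refine ciSup_le fun τ => ?_
  rw [← satCount_notMem_add_satCount_mem F A]
  exact add_le_add (le_ciSup (bddAbove_range_satCount _) τ) (satCount_le_card _ τ)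

theorem satMax_eq_iSup [Fintype V] (F : I → Finset (V × Bool)) :
    satMax F = ⨆ τ, satCount F τ :=
  Finset.sup_univ_eq_ciSup _

end Assignments

section Autarkies

variable {V I : Type*}

/-- The index set `F_S` of the clauses of `F` that contain a variable of `S`. -/
def touched (F : I → Finset (V × Bool)) (S : Set V) : Set I :=
  {i | ∃ l ∈ F i, l.1 ∈ S}

/-- The values of `σ` on `S` satisfy the restricted formula `F[S]`; in the SAT literature, such a
partial assignment is an autarky of `F`. The partial assignment is encoded as a total one whose
values outside `S` are irrelevant. -/
def IsAutarky (F : I → Finset (V × Bool)) (S : Set V) (σ : V → Bool) : Prop :=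
  ∀ i ∈ touched F S, ∃ l ∈ F i, l.1 ∈ S ∧ σ l.1 = l.2

variable {F : I → Finset (V × Bool)} {S : Set V} {σ : V → Bool}

theorem IsAutarky.satisfies_piecewise (hσ : IsAutarky F S σ) (τ : V → Bool) {i : I}
    (hi : i ∈ touched F S) : Satisfies (S.piecewise σ τ) (F i) := by
  obtain ⟨l, hl, hlS, hlσ⟩ := hσ i hi
  exact ⟨l, hl, (S.piecewise_eq_of_mem σ τ hlS).trans hlσ⟩

variable [Fintype I]

theorem satCount_piecewise_notMem_touched (F : I → Finset (V × Bool)) (S : Set V)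
    (σ τ : V → Bool) :
    satCount (fun i : {i // i ∉ touched F S} => F i) (S.piecewise σ τ) =
      satCount (fun i : {i // i ∉ touched F S} => F i) τ :=
  satCount_congr fun i l hl => S.piecewise_eq_of_notMem σ τ fun hlS => i.2 ⟨l, hl, hlS⟩

theorem IsAutarky.satCount_piecewise (hσ : IsAutarky F S σ) (τ : V → Bool) :
    satCount F (S.piecewise σ τ) =
      satCount (fun i : {i // i ∉ touched F S} => F i) τ +
        Fintype.card {i // i ∈ touched F S} := by
  rw [← satCount_notMem_add_satCount_mem F (touched F S), satCount_piecewise_notMem_touched,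
    satCount_eq_card fun i => hσ.satisfies_piecewise τ i.2]

theorem stmt7_general (F : I → Finset (V × Bool)) (S : Set V) (hsat : ∃ σ, IsAutarky F S σ) :
    ⨆ τ, satCount F τ =
      (⨆ τ, satCount (fun i : {i // i ∉ touched F S} => F i) τ) +
        Fintype.card {i // i ∈ touched F S} := by
  obtain ⟨σ, hσ⟩ := hsat
  refine le_antisymm (iSup_satCount_le_add_card F _) ?_
  obtain ⟨τ, hτ⟩ := exists_satCount_eq_iSup fun i : {i // i ∉ touched F S} => F i
  rw [← hτ, ← hσ.satCount_piecewise τ]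
  exact le_ciSup (bddAbove_range_satCount F) _

end Autarkies

/-- If `F[S]` is satisfiable (some assignment of the variables of `S` satisfies every
clause of `F_S` restricted to literals over `S`), then `sat(F) = sat(F ∖ F_S) + |F_S|`. -/
theorem stmt7 {V I : Type*} [Fintype V] [Fintype I] (F : I → Finset (V × Bool))
    (hne : ∀ i, (F i).Nonempty)
    (hone : ∀ i v b b', (v, b) ∈ F i → (v, b') ∈ F i → b = b')
    (S : Finset V)
    (hsat : ∃ σ : V → Bool,
      ∀ i : I, (∃ l ∈ F i, l.1 ∈ S) → ∃ l ∈ F i, l.1 ∈ S ∧ σ l.1 = l.2) :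
    satMax F =
      satMax (fun i : {i : I // ¬ ∃ l ∈ F i, l.1 ∈ S} => F i.1) +
      (Finset.univ.filter fun i : I => ∃ l ∈ F i, l.1 ∈ S).card := by
  rw [satMax_eq_iSup, satMax_eq_iSup, ← Fintype.card_subtype]
  convert stmt7_general F S hsat <;> rfl
end

section
/- Let F be a CNF formula over V in which every variable z occurs positively in exactly one clause, denoted c(z), and every clause contains at most one positive literal. Let x be a variable with |c(x)| ≥ 2, let i_x be the index of c(x), and let c' = c(x) ∖ {(x, true)}. Let F' be the formula on the same index set defined by: F'(i_x) = {(x, true)}; F'(i) = F(i) ∪ c' for every index i ≠ i_x whose clause contains the literal (x, false); and F'(i) = F(i) for all other indices (clauses of F' may contain both a literal and its negation; satisfaction is defined as before). Then sat(F') = sat(F) and ν(F') = ν(F). -/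
/-!
Let `c' = c(x) ∖ {x}`. Under an assignment that falsifies `c'`, both formulas have the same
satisfied indices. Under one that satisfies `c'`, the value of `x` may be chosen freely: setting `x`
to true satisfies the unit clause of `F'` and leaves the clauses containing `x̄` to `c'`; setting it
to false satisfies the clauses of `F` containing `x̄` and leaves `c(x)` to `c'`. The remaining
clauses do not contain `x`, so in both directions no satisfied index is lost.

Since `c` is injective, the pairs `(z, c z)` form a matching of `F` covering every variable, and
they remain one in `F'`. Hence both matching numbers equal the number of variables.
-/

open scoped Classical

section Satisfies

variable {V : Type*} {τ : V → Bool} {d e : Finset (V × Bool)}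

theorem Satisfies.mono (h : Satisfies τ d) (hde : d ⊆ e) : Satisfies τ e :=
  let ⟨l, hl, hτ⟩ := h
  ⟨l, hde hl, hτ⟩

theorem satisfies_singleton {x : V} {b : Bool} : Satisfies τ {(x, b)} ↔ τ x = b := by
  simp [Satisfies]

theorem satisfies_union : Satisfies τ (d ∪ e) ↔ Satisfies τ d ∨ Satisfies τ e := by
  simp only [Satisfies, Finset.mem_union, or_and_right, exists_or]

theorem satisfies_update_iff {x : V} (hx : ∀ b, (x, b) ∉ d) (a : Bool) :
    Satisfies (Function.update τ x a) d ↔ Satisfies τ d := by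
  refine exists_congr fun ⟨v, b⟩ => and_congr_right fun hl => ?_
  have hv : v ≠ x := by
    rintro rfl
    exact hx b hl
  rw [Function.update_of_ne hv]

theorem notMem_sdiff_singleton {x : V} {b : Bool} (h : (x, !b) ∉ d) (a : Bool) :
    (x, a) ∉ d \ {(x, b)} := by
  revert a
  exact (Bool.forall_bool' b).2
    ⟨Finset.notMem_sdiff_of_mem_right (Finset.mem_singleton_self _),
      fun hmem => h (Finset.sdiff_subset hmem)⟩

theorem satisfies_update_self {x : V} {b : Bool} (h : (x, b) ∈ d) :
    Satisfies (Function.update τ x b) d :=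
  ⟨(x, b), h, Function.update_self x b τ⟩

theorem satMax_le_of_forall_exists {I : Type*} [Fintype V] [Fintype I]
    {F G : I → Finset (V × Bool)}
    (h : ∀ τ, ∃ σ, ∀ i, Satisfies τ (F i) → Satisfies σ (G i)) :
    satMax F ≤ satMax G := by
  refine Finset.sup_le fun τ _ => ?_
  obtain ⟨σ, hσ⟩ := h τ
  calc satCount F τ
      ≤ satCount G σ := Finset.card_le_card (Finset.monotone_filter_right _ fun i _ => hσ i)
    _ ≤ satMax G := Finset.le_sup (f := satCount G) (Finset.mem_univ σ)

end Satisfies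

section Matching

variable {V I : Type*} [Fintype V] {F : I → Finset (V × Bool)} {c : V → I}

theorem IsMatching.card_le {M : Finset (V × I)} (hM : IsMatching F M) :
    M.card ≤ Fintype.card V := by
  have hinj : Set.InjOn Prod.fst (M : Set (V × I)) := fun p hp q hq hpq =>
    by_contra fun hne => (hM.2 p hp q hq hne).1 hpq
  exact Finset.card_le_card_of_injOn Prod.fst (fun _ _ => Finset.mem_univ _) hinj

theorem isMatching_image_graph (hinj : Function.Injective c)
    (hocc : ∀ z, ∃ b, (z, b) ∈ F (c z)) :
    IsMatching F (Finset.univ.image fun z => (z, c z)) := by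
  simp only [IsMatching, Finset.forall_mem_image]
  refine ⟨fun z _ => hocc z, fun z _ w _ hzw => ?_⟩
  have hne : z ≠ w := by
    rintro rfl
    exact hzw rfl
  exact ⟨hne, hinj.ne hne⟩

theorem matchNum_eq_card [Fintype I] (hinj : Function.Injective c)
    (hocc : ∀ z, ∃ b, (z, b) ∈ F (c z)) : matchNum F = Fintype.card V := by
  apply le_antisymm
  · exact Finset.sup_le fun M hM => (Finset.mem_filter.1 hM).2.card_le
  · calc Fintype.card V
        = (Finset.univ.image fun z => (z, c z)).card :=
          (Finset.card_image_of_injective _ fun _ _ h => congrArg Prod.fst h).symm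
      _ ≤ matchNum F := Finset.le_sup (f := Finset.card)
          (Finset.mem_filter.2 ⟨Finset.mem_univ _, isMatching_image_graph hinj hocc⟩)

end Matching

section IsolateLiteral

variable {V I : Type*} {F : I → Finset (V × Bool)} {i j : I} {x : V} {b : Bool} {τ : V → Bool}

/-- The transformation `F ↦ F'` for a literal `(x, b)` of either sign: the clause at `j` shrinks to
the unit clause `{(x, b)}`, and the rest of `F j` moves to the other clauses that contain the
complementary literal `(x, !b)`. The index `j` is a free parameter, so that the definition does not
depend on `(x, b)` occurring in exactly one clause. -/
noncomputable def isolateLiteral (F : I → Finset (V × Bool)) (j : I) (x : V) (b : Bool) :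
    I → Finset (V × Bool) := fun i =>
  if i = j then {(x, b)}
  else if (x, !b) ∈ F i then F i ∪ (F j \ {(x, b)})
  else F i

theorem isolateLiteral_self : isolateLiteral F j x b j = {(x, b)} :=
  if_pos rfl

theorem isolateLiteral_of_mem (hij : i ≠ j) (h : (x, !b) ∈ F i) :
    isolateLiteral F j x b i = F i ∪ (F j \ {(x, b)}) :=
  (if_neg hij).trans (if_pos h)

theorem isolateLiteral_of_notMem (hij : i ≠ j) (h : (x, !b) ∉ F i) :
    isolateLiteral F j x b i = F i :=
  (if_neg hij).trans (if_neg h)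

theorem subset_isolateLiteral (hij : i ≠ j) : F i ⊆ isolateLiteral F j x b i := by
  by_cases h : (x, !b) ∈ F i
  · exact isolateLiteral_of_mem hij h ▸ Finset.subset_union_left
  · exact (isolateLiteral_of_notMem hij h).ge

theorem satisfies_isolateLiteral_iff (hj : (x, b) ∈ F j)
    (hτ : ¬Satisfies τ (F j \ {(x, b)})) (i : I) :
    Satisfies τ (isolateLiteral F j x b i) ↔ Satisfies τ (F i) := by
  obtain rfl | hij := eq_or_ne i j
  · have hsplit : {(x, b)} ∪ (F i \ {(x, b)}) = F i :=
      Finset.union_sdiff_of_subset (Finset.singleton_subset_iff.2 hj)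
    calc Satisfies τ (isolateLiteral F i x b i)
        ↔ Satisfies τ {(x, b)} ∨ Satisfies τ (F i \ {(x, b)}) := by
          rw [isolateLiteral_self, or_iff_left hτ]
      _ ↔ Satisfies τ (F i) := by rw [← satisfies_union, hsplit]
  · by_cases h : (x, !b) ∈ F i
    · rw [isolateLiteral_of_mem hij h, satisfies_union, or_iff_left hτ]
    · rw [isolateLiteral_of_notMem hij h]

theorem Satisfies.isolateLiteral_update (hx : ∀ i, (x, b) ∈ F i → i = j) (hneg : (x, !b) ∉ F j)
    (hτ : Satisfies τ (F j \ {(x, b)})) (h : Satisfies τ (F i)) :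
    Satisfies (Function.update τ x b) (isolateLiteral F j x b i) := by
  obtain rfl | hij := eq_or_ne i j
  · rw [isolateLiteral_self, satisfies_singleton, Function.update_self]
  by_cases hi : (x, !b) ∈ F i
  · rw [isolateLiteral_of_mem hij hi, satisfies_union,
      satisfies_update_iff (notMem_sdiff_singleton hneg)]
    exact .inr hτ
  · have hfree : ∀ a, (x, a) ∉ F i := (Bool.forall_bool' b).2 ⟨mt (hx i) hij, hi⟩
    rw [isolateLiteral_of_notMem hij hi]
    exact (satisfies_update_iff hfree b).2 h

theorem Satisfies.update_of_isolateLiteral (hx : ∀ i, (x, b) ∈ F i → i = j)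
    (hneg : (x, !b) ∉ F j) (hτ : Satisfies τ (F j \ {(x, b)}))
    (h : Satisfies τ (isolateLiteral F j x b i)) :
    Satisfies (Function.update τ x !b) (F i) := by
  obtain rfl | hij := eq_or_ne i j
  · have hupdate := (satisfies_update_iff (notMem_sdiff_singleton hneg) (!b)).2 hτ
    exact hupdate.mono Finset.sdiff_subset
  by_cases hi : (x, !b) ∈ F i
  · exact satisfies_update_self hi
  · have hfree : ∀ a, (x, a) ∉ F i := (Bool.forall_bool' b).2 ⟨mt (hx i) hij, hi⟩
    rw [isolateLiteral_of_notMem hij hi] at h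
    exact (satisfies_update_iff hfree _).2 h

variable [Fintype V] [Fintype I]

theorem satMax_isolateLiteral (hx : ∀ i, (x, b) ∈ F i ↔ i = j) (hneg : (x, !b) ∉ F j) :
    satMax (isolateLiteral F j x b) = satMax F := by
  have hj : (x, b) ∈ F j := (hx j).2 rfl
  have honly : ∀ i, (x, b) ∈ F i → i = j := fun i => (hx i).1
  apply le_antisymm
  · refine satMax_le_of_forall_exists fun τ => ?_
    by_cases hτ : Satisfies τ (F j \ {(x, b)})
    · exact ⟨Function.update τ x !b, fun _ => .update_of_isolateLiteral honly hneg hτ⟩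
    · exact ⟨τ, fun i => (satisfies_isolateLiteral_iff hj hτ i).1⟩
  · refine satMax_le_of_forall_exists fun τ => ?_
    by_cases hτ : Satisfies τ (F j \ {(x, b)})
    · exact ⟨Function.update τ x b, fun _ => .isolateLiteral_update honly hneg hτ⟩
    · exact ⟨τ, fun i => (satisfies_isolateLiteral_iff hj hτ i).2⟩

theorem matchNum_isolateLiteral {c : V → I} (hinj : Function.Injective c)
    (hocc : ∀ z, ∃ a, (z, a) ∈ F (c z)) (x : V) (b : Bool) :
    matchNum (isolateLiteral F (c x) x b) = matchNum F := by
  have hocc' : ∀ z, ∃ a, (z, a) ∈ isolateLiteral F (c x) x b (c z) := by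
    intro z
    obtain rfl | hzx := eq_or_ne z x
    · exact ⟨b, isolateLiteral_self ▸ Finset.mem_singleton_self _⟩
    · exact (hocc z).imp fun _ ha => subset_isolateLiteral (hinj.ne hzx) ha
  rw [matchNum_eq_card hinj hocc', matchNum_eq_card hinj hocc]

theorem stmt10_general {c : V → I} (hinj : Function.Injective c)
    (hocc : ∀ z, ∃ a, (z, a) ∈ F (c z)) (hx : ∀ i, (x, b) ∈ F i ↔ i = c x)
    (hneg : (x, !b) ∉ F (c x)) :
    satMax (isolateLiteral F (c x) x b) = satMax F ∧
      matchNum (isolateLiteral F (c x) x b) = matchNum F :=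
  ⟨satMax_isolateLiteral hx hneg, matchNum_isolateLiteral hinj hocc x b⟩

end IsolateLiteral

/-- The transformation of Section 4: if every variable occurs positively in exactly one
clause `c(z)` and every clause has at most one positive literal, then for a variable `x`
with `|c(x)| ≥ 2`, replacing `c(x)` by the unit clause `{(x, true)}` and adding
`c' = c(x) ∖ {(x, true)}` to every clause containing `(x, false)` preserves both `sat`
and the matching number. -/
theorem stmt10 {V I : Type*} [Fintype V] [Fintype I] (F : I → Finset (V × Bool))
    (hne : ∀ i, (F i).Nonempty)
    (hone : ∀ i v b b', (v, b) ∈ F i → (v, b') ∈ F i → b = b')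
    (c : V → I) (hc : ∀ (z : V) (i : I), (z, true) ∈ F i ↔ i = c z)
    (hpos : ∀ i v w, (v, true) ∈ F i → (w, true) ∈ F i → v = w)
    (x : V) (hx : 2 ≤ (F (c x)).card)
    (F' : I → Finset (V × Bool))
    (hF' : ∀ i, F' i =
      if i = c x then {(x, true)}
      else if (x, false) ∈ F i then F i ∪ (F (c x) \ {(x, true)})
      else F i) :
    satMax F' = satMax F ∧ matchNum F' = matchNum F := by
  have hmem : ∀ z, (z, true) ∈ F (c z) := fun z => (hc z _).2 rfl
  have hinj : Function.Injective c := fun z w h => hpos (c z) z w (hmem z) (h ▸ hmem w)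
  have hneg : (x, false) ∉ F (c x) := fun h => Bool.false_ne_true (hone _ _ _ _ h (hmem x))
  obtain rfl : F' = isolateLiteral F (c x) x true := funext hF'
  exact stmt10_general hinj (fun z => ⟨true, hmem z⟩) (hc x) hneg
end

section
/- Let F be a CNF formula over a finite variable type V whose index set is a disjoint union I = I₁ ⊔ I₂ such that there is a bijection u : V → I₁ with F(u x) = {(x, true)} for every x ∈ V, and for every i ∈ I₂ the clause F i is nonempty and contains only negative literals. Then there exists an assignment τ with sat_τ(F) = sat(F) that satisfies the clause F i for every i ∈ I₂. -/
/-!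
Suppose a clause contains the literal `v̄` and is not satisfied by `τ`. Then `τ v` is true, and
setting `v` to false repairs this clause while breaking only clauses that contain the positive
literal `v`. If there is at most one such clause, the number of satisfied clauses does not drop.
Each flip removes a variable from the finite set of true variables occurring in the formula, so
the process stops; started at an optimal assignment, it ends at an optimal one satisfying every such
clause. Here `v` occurs positively in its unit clause only. Arbitrary target values `p v` can take
the place of false.
-/

open scoped Classical

section Update

variable {V : Type*} {τ : V → Bool} {c : Finset (V × Bool)} {x : V} {b : Bool}

theorem satisfies_update_of_mem (hx : (x, b) ∈ c) : Satisfies (Function.update τ x b) c :=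
  ⟨(x, b), hx, Function.update_self x b τ⟩

theorem Satisfies.update (hc : Satisfies τ c) (hx : (x, !b) ∉ c) :
    Satisfies (Function.update τ x b) c := by
  obtain ⟨⟨y, b'⟩, hy, hτy⟩ := hc
  refine ⟨(y, b'), hy, ?_⟩
  obtain rfl | hyx := eq_or_ne y x
  · have hb' : b' ≠ !b := fun h => hx (h ▸ hy)
    simpa using hb'.symm
  · exact (Function.update_of_ne hyx b τ).trans hτy

end Update

section Formula

variable {V I : Type*} [Fintype I] (F : I → Finset (V × Bool))

theorem satCount_le_satCount_update {τ : V → Bool} {x : V} {b : Bool} {j : I}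
    (hx : (x, b) ∈ F j) (hj : ¬ Satisfies τ (F j))
    (hb : {i | (x, !b) ∈ F i}.Subsingleton) :
    satCount F τ ≤ satCount F (Function.update τ x b) := by
  unfold satCount
  set before := Finset.univ.filter fun i => Satisfies τ (F i)
  set after := Finset.univ.filter fun i => Satisfies (Function.update τ x b) (F i)
  have hlost : ∀ i ∈ before \ after, (x, !b) ∈ F i := by
    intro i hi
    simp only [before, after, Finset.mem_sdiff, Finset.mem_filter, Finset.mem_univ,
      true_and] at hi
    by_contra hxi
    exact hi.2 (hi.1.update hxi)
  have hgained : j ∈ after \ before := by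
    simpa [before, after, hj] using satisfies_update_of_mem hx
  rw [← Finset.card_sdiff_le_card_sdiff_iff]
  calc (before \ after).card
      ≤ 1 := Finset.card_le_one.2 fun i hi k hk => hb (hlost i hi) (hlost k hk)
    _ ≤ (after \ before).card := Finset.card_pos.2 ⟨j, hgained⟩

theorem exists_forall_satCount_le : ∃ σ : V → Bool, ∀ τ, satCount F τ ≤ satCount F σ := by
  have hbdd : BddAbove (Set.range (satCount F)) :=
    ⟨Fintype.card I, Set.forall_mem_range.2 fun _ => Finset.card_le_univ _⟩
  obtain ⟨σ, hσ⟩ := Nat.sSup_mem (Set.range_nonempty (satCount F)) hbdd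
  exact ⟨σ, fun τ => hσ ▸ le_csSup hbdd (Set.mem_range_self τ)⟩

theorem satCount_eq_satMax [Fintype V] {τ : V → Bool}
    (hτ : ∀ σ, satCount F σ ≤ satCount F τ) : satCount F τ = satMax F :=
  le_antisymm (Finset.le_sup (f := satCount F) (Finset.mem_univ τ))
    (Finset.sup_le fun σ _ => hτ σ)

/-- The variables on which `τ` differs from the prescribed values `p`; it measures the progress of
the flipping process. Only variables occurring in `F` count, so that the set is finite for every
`V`. -/
noncomputable def disagreements (p τ : V → Bool) : Finset V :=
  (Finset.univ.biUnion fun i => (F i).image Prod.fst).filter fun v => τ v ≠ p v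

theorem disagreements_update (p τ : V → Bool) (x : V) :
    disagreements F p (Function.update τ x (p x)) = (disagreements F p τ).erase x := by
  ext v
  obtain rfl | hv := eq_or_ne v x <;> simp [disagreements, *]

theorem card_disagreements_update_lt {p τ : V → Bool} {x : V} {b : Bool} {i : I}
    (hx : (x, b) ∈ F i) (hτ : τ x ≠ p x) :
    (disagreements F p (Function.update τ x (p x))).card < (disagreements F p τ).card := by
  have hmem : x ∈ disagreements F p τ :=
    Finset.mem_filter.2 ⟨Finset.mem_biUnion.2
      ⟨i, Finset.mem_univ i, Finset.mem_image_of_mem Prod.fst hx⟩, hτ⟩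
  rw [disagreements_update]
  exact Finset.card_erase_lt_of_mem hmem

theorem exists_satCount_le_and_satisfies (p σ : V → Bool) :
    ∃ τ, satCount F σ ≤ satCount F τ ∧
      ∀ i v, (v, p v) ∈ F i → {k | (v, !p v) ∈ F k}.Subsingleton → Satisfies τ (F i) := by
  by_cases! hσ :
      ∀ i v, (v, p v) ∈ F i → {k | (v, !p v) ∈ F k}.Subsingleton → Satisfies σ (F i)
  · exact ⟨σ, le_rfl, hσ⟩
  obtain ⟨i, x, hx, hsub, hi⟩ := hσ
  obtain ⟨τ, hle, hτ⟩ := exists_satCount_le_and_satisfies p (Function.update σ x (p x))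
  exact ⟨τ, (satCount_le_satCount_update F hx hi hsub).trans hle, hτ⟩
termination_by (disagreements F p σ).card
decreasing_by exact card_disagreements_update_lt F hx fun h => hi ⟨(x, p x), hx, h⟩

theorem stmt12_general (p : V → Bool) :
    ∃ τ, (∀ σ, satCount F σ ≤ satCount F τ) ∧
      ∀ i v, (v, p v) ∈ F i → {k | (v, !p v) ∈ F k}.Subsingleton → Satisfies τ (F i) := by
  obtain ⟨σ, hσ⟩ := exists_forall_satCount_le F
  obtain ⟨τ, hle, hτ⟩ := exists_satCount_le_and_satisfies F p σ
  exact ⟨τ, fun ρ => (hσ ρ).trans hle, hτ⟩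

end Formula

theorem exists_neg_mem {V : Type*} {c : Finset (V × Bool)} (hc : c.Nonempty)
    (hneg : ∀ l ∈ c, l.2 = false) : ∃ x, (x, false) ∈ c := by
  obtain ⟨⟨x, b⟩, hx⟩ := hc
  obtain rfl : b = false := hneg _ hx
  exact ⟨x, hx⟩

theorem subsingleton_setOf_pos_mem {V I₁ I₂ : Type*} {F : I₁ ⊕ I₂ → Finset (V × Bool)}
    {u : V → I₁} (hu : Function.Surjective u) (hunit : ∀ x, F (Sum.inl (u x)) = {(x, true)})
    (hneg : ∀ j, ∀ l ∈ F (Sum.inr j), l.2 = false) (x : V) :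
    {i | (x, true) ∈ F i}.Subsingleton := by
  refine Set.subsingleton_of_subset_singleton (a := Sum.inl (u x)) ?_
  rintro (a | j) hx
  · obtain ⟨y, rfl⟩ := hu a
    have hxy : (x, true) ∈ ({(y, true)} : Finset (V × Bool)) := hunit y ▸ hx
    obtain rfl : x = y := by simpa using hxy
    exact Set.mem_singleton _
  · exact absurd (hneg j _ hx) Bool.noConfusion

/-- For a transformed special formula (unit positive clauses indexed by `I₁` via a
bijection with the variables, and purely negative nonempty clauses indexed by `I₂`),
there is an optimal assignment satisfying every clause of `I₂`. -/
theorem stmt12 {V I₁ I₂ : Type*} [Fintype V] [Fintype I₁] [Fintype I₂]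
    (F : I₁ ⊕ I₂ → Finset (V × Bool))
    (hone : ∀ i v b b', (v, b) ∈ F i → (v, b') ∈ F i → b = b')
    (u : V ≃ I₁) (hu : ∀ x : V, F (Sum.inl (u x)) = {(x, true)})
    (h2 : ∀ j : I₂, (F (Sum.inr j)).Nonempty ∧ ∀ l ∈ F (Sum.inr j), l.2 = false) :
    ∃ τ : V → Bool, satCount F τ = satMax F ∧
      ∀ j : I₂, Satisfies τ (F (Sum.inr j)) := by
  obtain ⟨τ, hmax, hτ⟩ := stmt12_general F fun _ => false
  exact ⟨τ, satCount_eq_satMax F hmax, fun j => (exists_neg_mem (h2 j).1 (h2 j).2).elim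
    fun x hx => hτ _ x hx (subsingleton_setOf_pos_mem u.surjective hu (fun k => (h2 k).2) x)⟩
end
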